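/- Soundness and completeness of H_KT4 with respect to the RNmatrix RM_KT4: for every set of formulas Γ and every formula A, Γ ⊢_{H_KT4} A if and only if every valuation v ∈ F_KT4 that designates all formulas of Γ also designates A. -/

import Mathlib

/-- Formulas of the modal language: propositional variables, negation,
the modality ⊖ (here `box`), and implication. -/
inductive Form : Type
  | var : ℕ → Form
  | neg : Form → Form
  | box : Form → Form
  | imp : Form → Form → Form

/-- A valuation `v = (v1, v2)` over the 4-valued Nmatrix for the minimal modal
logic M: `v1` behaves classically on ¬ and →, and `v1(⊖A) = v2(A)`;
`v2` is otherwise unconstrained. -/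
structure Val where
  v1 : Form → Fin 2
  v2 : Form → Fin 2
  neg_eq : ∀ A, v1 (Form.neg A) = 1 - v1 A
  imp_eq : ∀ A B, v1 (Form.imp A B) = max (1 - v1 A) (v1 B)
  box_eq : ∀ A, v1 (Form.box A) = v2 A

/-- The restriction defining F_K: valuations satisfying the (K) condition. -/
def FK (v : Val) : Prop :=
  ∀ A B : Form, v.v2 (A.imp B) ≤ max (1 - v.v2 A) (v.v2 B)

/-- The restriction defining F_KT4. -/
def FKT4 (v : Val) : Prop :=
  FK v ∧ (∀ A : Form, v.v2 A ≤ v.v1 A) ∧ (∀ A : Form, v.v2 A ≤ v.v2 (Form.box A))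

/-- The Hilbert calculus H_KT4: H plus axiom schemas (K), (T) and (4). -/
inductive HKT4 : Set Form → Form → Prop
  | hyp {Γ A} : A ∈ Γ → HKT4 Γ A
  | ax1 {Γ} (A B : Form) : HKT4 Γ (A.imp (B.imp A))
  | ax2 {Γ} (A B C : Form) :
      HKT4 Γ ((A.imp (B.imp C)).imp ((A.imp B).imp (A.imp C)))
  | ax3 {Γ} (A B : Form) : HKT4 Γ ((B.neg.imp A.neg).imp (A.imp B))
  | axK {Γ} (A B : Form) :
      HKT4 Γ ((Form.box (A.imp B)).imp ((Form.box A).imp (Form.box B)))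
  | axT {Γ} (A : Form) : HKT4 Γ ((Form.box A).imp A)
  | ax4 {Γ} (A : Form) : HKT4 Γ ((Form.box A).imp (Form.box (Form.box A)))
  | mp {Γ A B} : HKT4 Γ (A.imp B) → HKT4 Γ A → HKT4 Γ B

/-!
Soundness is an induction on derivations, since a valuation lies in `FKT4` exactly when it
designates every instance of (K), (T) and (4). For completeness, if `Γ ⊬ A`, Zorn's lemma and the
finiteness of derivations extend `Γ` to a set `Δ` maximal among those not deriving `A`. Such a `Δ`
is deductively closed and respects `¬` and `→`, so its characteristic function is the `v1` of a
valuation refuting `A`. No accessibility relation or necessitation rule enters: `v2 B` is simply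
read off from whether `⊖B ∈ Δ`.
-/

theorem fin_two_one_sub_eq_one_iff {a : Fin 2} : 1 - a = 1 ↔ a ≠ 1 := by
  decide +revert

theorem fin_two_max_one_sub_eq_one_iff {a b : Fin 2} : max (1 - a) b = 1 ↔ (a = 1 → b = 1) := by
  decide +revert

theorem fin_two_le_iff {a b : Fin 2} : a ≤ b ↔ (a = 1 → b = 1) := by
  decide +revert

theorem fin_two_eq_iff {a b : Fin 2} : a = b ↔ (a = 1 ↔ b = 1) := by
  decide +revert

theorem Val.imp_eq_one_iff (v : Val) (A B : Form) :
    v.v1 (A.imp B) = 1 ↔ (v.v1 A = 1 → v.v1 B = 1) := by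
  rw [v.imp_eq, fin_two_max_one_sub_eq_one_iff]

theorem Val.neg_eq_one_iff (v : Val) (A : Form) : v.v1 A.neg = 1 ↔ v.v1 A ≠ 1 := by
  rw [v.neg_eq, fin_two_one_sub_eq_one_iff]

theorem FKT4_iff_modal_axioms_eq_one (v : Val) :
    FKT4 v ↔
      (∀ A B : Form, v.v1 ((A.imp B).box.imp (A.box.imp B.box)) = 1) ∧
      (∀ A : Form, v.v1 (A.box.imp A) = 1) ∧
      (∀ A : Form, v.v1 (A.box.imp A.box.box) = 1) := by
  simp only [FKT4, FK, v.imp_eq_one_iff, v.box_eq, fin_two_le_iff, fin_two_max_one_sub_eq_one_iff]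

/-- A set of formulas that decides `¬` and `→` classically, i.e. the set of formulas designated by
some valuation. Membership of boxed formulas is unconstrained, as `v2` is in `Val`. -/
structure IsTruthSet (Δ : Set Form) : Prop where
  neg_mem_iff (B : Form) : B.neg ∈ Δ ↔ B ∉ Δ
  imp_mem_iff (B C : Form) : B.imp C ∈ Δ ↔ (B ∈ Δ → C ∈ Δ)

open Classical in
/-- The valuation designating exactly the members of a truth set `Δ`: `v1` is the characteristic
function of `Δ`, and `v2 B` is forced to be the value of `v1` at `⊖B`. -/
noncomputable def IsTruthSet.toVal {Δ : Set Form} (hΔ : IsTruthSet Δ) : Val where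
  v1 B := if B ∈ Δ then 1 else 0
  v2 B := if B.box ∈ Δ then 1 else 0
  neg_eq B := by
    rw [fin_two_eq_iff, fin_two_one_sub_eq_one_iff]
    simp [hΔ.neg_mem_iff]
  imp_eq B C := by
    rw [fin_two_eq_iff, fin_two_max_one_sub_eq_one_iff]
    simp [hΔ.imp_mem_iff]
  box_eq _ := rfl

theorem IsTruthSet.toVal_eq_one_iff {Δ : Set Form} (hΔ : IsTruthSet Δ) (B : Form) :
    hΔ.toVal.v1 B = 1 ↔ B ∈ Δ := by
  simp [toVal]

namespace HKT4

variable {Γ Δ : Set Form} {A B C : Form}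

theorem sound {v : Val} (hv : FKT4 v) (hΓ : ∀ B ∈ Γ, v.v1 B = 1) (h : HKT4 Γ A) :
    v.v1 A = 1 := by
  obtain ⟨hK, hT, h4⟩ := (FKT4_iff_modal_axioms_eq_one v).1 hv
  induction h with
  | hyp hA => exact hΓ _ hA
  | ax1 | ax2 | ax3 =>
    simp only [v.imp_eq_one_iff, v.neg_eq_one_iff]
    tauto
  | axK A B => exact hK A B
  | axT A => exact hT A
  | ax4 A => exact h4 A
  | mp _ _ ihAB ihA => exact (v.imp_eq_one_iff _ _).1 ihAB ihA

theorem mono (hΓΔ : Γ ⊆ Δ) (h : HKT4 Γ A) : HKT4 Δ A := by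
  induction h with
  | hyp hA => exact hyp (hΓΔ hA)
  | ax1 => exact ax1 ..
  | ax2 => exact ax2 ..
  | ax3 => exact ax3 ..
  | axK => exact axK ..
  | axT => exact axT ..
  | ax4 => exact ax4 ..
  | mp _ _ ihAB ihA => exact mp ihAB ihA

theorem exists_finite_subset (h : HKT4 Γ A) : ∃ Γ₀ ⊆ Γ, Γ₀.Finite ∧ HKT4 Γ₀ A := by
  induction h with
  | @hyp A hA =>
    exact ⟨{A}, Set.singleton_subset_iff.2 hA, Set.finite_singleton A, hyp (Set.mem_singleton A)⟩
  | ax1 => exact ⟨∅, Set.empty_subset _, Set.finite_empty, ax1 ..⟩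
  | ax2 => exact ⟨∅, Set.empty_subset _, Set.finite_empty, ax2 ..⟩
  | ax3 => exact ⟨∅, Set.empty_subset _, Set.finite_empty, ax3 ..⟩
  | axK => exact ⟨∅, Set.empty_subset _, Set.finite_empty, axK ..⟩
  | axT => exact ⟨∅, Set.empty_subset _, Set.finite_empty, axT ..⟩
  | ax4 => exact ⟨∅, Set.empty_subset _, Set.finite_empty, ax4 ..⟩
  | mp _ _ ihAB ihA =>
    obtain ⟨Γ₁, hΓ₁, hfin₁, hAB⟩ := ihAB
    obtain ⟨Γ₂, hΓ₂, hfin₂, hA⟩ := ihA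
    exact ⟨Γ₁ ∪ Γ₂, Set.union_subset hΓ₁ hΓ₂, hfin₁.union hfin₂,
      mp (hAB.mono Set.subset_union_left) (hA.mono Set.subset_union_right)⟩

theorem exists_mem_of_sUnion {S : Set (Set Form)} (hne : S.Nonempty)
    (hdir : DirectedOn (· ⊆ ·) S) (h : HKT4 (⋃₀ S) A) : ∃ Γ ∈ S, HKT4 Γ A := by
  obtain ⟨Γ₀, hΓ₀, hfin, hA⟩ := h.exists_finite_subset
  obtain ⟨Γ, hΓ, hΓ₀Γ⟩ := hdir.exists_mem_subset_of_finite_of_subset_sUnion hne hfin hΓ₀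
  exact ⟨Γ, hΓ, hA.mono hΓ₀Γ⟩

theorem imp_of_right (h : HKT4 Γ B) : HKT4 Γ (A.imp B) :=
  mp (ax1 ..) h

theorem mp_under_imp (hBC : HKT4 Γ (A.imp (B.imp C))) (hB : HKT4 Γ (A.imp B)) : HKT4 Γ (A.imp C) :=
  mp (mp (ax2 ..) hBC) hB

theorem imp_refl (A : Form) : HKT4 Γ (A.imp A) :=
  mp_under_imp (ax1 A (A.imp A)) (ax1 A A)

theorem imp_trans (hAB : HKT4 Γ (A.imp B)) (hBC : HKT4 Γ (B.imp C)) : HKT4 Γ (A.imp C) :=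
  mp_under_imp (imp_of_right hBC) hAB

theorem deduction (h : HKT4 (insert A Γ) B) : HKT4 Γ (A.imp B) := by
  generalize hΔ : insert A Γ = Δ at h
  induction h with
  | hyp hB =>
    subst hΔ
    obtain rfl | hB := hB
    · exact imp_refl _
    · exact imp_of_right (hyp hB)
  | ax1 => exact imp_of_right (ax1 ..)
  | ax2 => exact imp_of_right (ax2 ..)
  | ax3 => exact imp_of_right (ax3 ..)
  | axK => exact imp_of_right (axK ..)
  | axT => exact imp_of_right (axT ..)
  | ax4 => exact imp_of_right (ax4 ..)
  | mp _ _ ihBC ihB => exact mp_under_imp ihBC ihB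

theorem neg_imp_imp (A B : Form) : HKT4 Γ (A.neg.imp (A.imp B)) :=
  imp_trans (ax1 A.neg B.neg) (ax3 A B)

theorem of_neg_imp_self (h : HKT4 Γ (A.neg.imp A)) : HKT4 Γ A :=
  have neg_imp_absurd : HKT4 Γ (A.neg.imp (A.imp A).neg) := mp_under_imp (neg_imp_imp A _) h
  mp (mp (ax3 ..) neg_imp_absurd) (imp_refl A)

theorem of_imp_of_neg_imp (hpos : HKT4 Γ (B.imp A)) (hneg : HKT4 Γ (B.neg.imp A)) : HKT4 Γ A := by
  refine of_neg_imp_self (deduction ?_)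
  have hΓ : Γ ⊆ insert A.neg Γ := Set.subset_insert _ _
  have hAB : HKT4 (insert A.neg Γ) (A.imp B) := mp (neg_imp_imp A B) (hyp (Set.mem_insert _ _))
  have hB : HKT4 (insert A.neg Γ) B := of_neg_imp_self (imp_trans (hneg.mono hΓ) hAB)
  exact mp (hpos.mono hΓ) hB

end HKT4

/-- `Δ` is `A`-saturated: it is maximal, under inclusion, among the sets of formulas not deriving
`A`. These sets take the place of the maximal consistent sets of the Lindenbaum construction. -/
def IsSaturated (A : Form) (Δ : Set Form) : Prop :=
  Maximal (fun Γ => ¬ HKT4 Γ A) Δ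

theorem exists_isSaturated_superset {Γ : Set Form} {A : Form} (h : ¬ HKT4 Γ A) :
    ∃ Δ, Γ ⊆ Δ ∧ IsSaturated A Δ := by
  refine zorn_subset_nonempty {Δ | ¬ HKT4 Δ A} (fun S hS hchain hne => ?_) Γ h
  refine ⟨⋃₀ S, fun hA => ?_, fun _ => Set.subset_sUnion_of_mem⟩
  obtain ⟨Δ, hΔ, hΔA⟩ := hA.exists_mem_of_sUnion hne hchain.directedOn
  exact hS hΔ hΔA

namespace IsSaturated

variable {Δ : Set Form} {A B : Form}

theorem not_derivable (hΔ : IsSaturated A Δ) : ¬ HKT4 Δ A :=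
  hΔ.prop

theorem imp_of_notMem (hΔ : IsSaturated A Δ) (hB : B ∉ Δ) : HKT4 Δ (B.imp A) := by
  refine HKT4.deduction (not_not.1 fun hBA => hB ?_)
  exact hΔ.le_of_ge hBA (Set.subset_insert B Δ) (Set.mem_insert B Δ)

theorem mem_of_derivable (hΔ : IsSaturated A Δ) (hB : HKT4 Δ B) : B ∈ Δ :=
  not_not.1 fun hnB => hΔ.not_derivable ((hΔ.imp_of_notMem hnB).mp hB)

theorem isTruthSet (hΔ : IsSaturated A Δ) : IsTruthSet Δ := by
  have neg_mem_iff (B : Form) : B.neg ∈ Δ ↔ B ∉ Δ := by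
    constructor
    · intro hnB hB
      exact hΔ.not_derivable (((HKT4.neg_imp_imp B A).mp (.hyp hnB)).mp (.hyp hB))
    · intro hB
      by_contra hnB
      exact hΔ.not_derivable
        (HKT4.of_imp_of_neg_imp (hΔ.imp_of_notMem hB) (hΔ.imp_of_notMem hnB))
  refine ⟨neg_mem_iff, fun B C => ⟨fun hBC hB => ?_, fun hBC => hΔ.mem_of_derivable ?_⟩⟩
  · exact hΔ.mem_of_derivable ((HKT4.hyp hBC).mp (.hyp hB))
  · by_cases hB : B ∈ Δ
    · exact HKT4.imp_of_right (.hyp (hBC hB))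
    · exact (HKT4.neg_imp_imp B C).mp (.hyp ((neg_mem_iff B).2 hB))

theorem FKT4_toVal (hΔ : IsSaturated A Δ) : FKT4 hΔ.isTruthSet.toVal := by
  simp only [FKT4_iff_modal_axioms_eq_one, IsTruthSet.toVal_eq_one_iff]
  exact ⟨fun B C => hΔ.mem_of_derivable (.axK B C), fun B => hΔ.mem_of_derivable (.axT B),
    fun B => hΔ.mem_of_derivable (.ax4 B)⟩

end IsSaturated

/-- Soundness and completeness of H_KT4 w.r.t. the RNmatrix RM_KT4. -/
theorem soundness_completeness_HKT4 (Γ : Set Form) (A : Form) :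
    HKT4 Γ A ↔ ∀ v : Val, FKT4 v → (∀ B ∈ Γ, v.v1 B = 1) → v.v1 A = 1 := by
  refine ⟨fun h v hv hΓ => h.sound hv hΓ, fun h => ?_⟩
  by_contra hA
  obtain ⟨Δ, hΓΔ, hΔ⟩ := exists_isSaturated_superset hA
  have toVal_iff := hΔ.isTruthSet.toVal_eq_one_iff
  have designates_A := h hΔ.isTruthSet.toVal hΔ.FKT4_toVal fun B hB => (toVal_iff B).2 (hΓΔ hB)
  exact hΔ.not_derivable (.hyp ((toVal_iff A).1 designates_A))
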